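/- Let V ∈ C(𝕋^d, ℂ) be Hölder continuous, let m ∈ ℕ and a_{±1}, …, a_{±m} ∈ ℂ, and for α, θ ∈ 𝕋^d let T(α, θ) be the bounded operator on ℓ²(ℤ) whose matrix (t_{ij})_{i,j∈ℤ} satisfies t_{j,j} = V(θ₁ + jα₁, …, θ_d + jα_d), t_{j, j±k} = a_{±k} for 1 ≤ k ≤ m, and t_{j, j±k} = 0 for k > m. Define 𝒮(T(α)) = ⋃_{θ∈𝕋^d} σ(T(α, θ)). If α^{(n)} → α in 𝕋^d and z ∈ 𝒮(T(α^{(n)})) for every n, then z ∈ 𝒮(T(α)). -/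

import Mathlib

open MeasureTheory Complex Filter

noncomputable section

abbrev ℓ2 (ι : Type*) := lp (fun _ : ι => ℂ) 2

/-!
Suppose `z` lies in the resolvent set of every `T α θ`. By compactness in `θ`, the operators
`T α θ - z` and their adjoints have a common lower bound `c`. On a window of fixed length `N`, the
orbit of `θ` under `β` stays close to an orbit under `α` once `β` is near `α`, so `T β θ - z` is
bounded below on sequences supported in any window of length `N`. A band operator commutes with
truncation to a window up to terms living near its two endpoints; averaged over all translates of
the window these make up a fraction `O(m / N)` of the total, so the local lower bounds give a global
one. Lower bounds for an operator and for its adjoint make it invertible, hence `z` stays in the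
resolvent set of every `T β θ`.
-/

open Topology Pointwise ContinuousLinearMap

section NormedSpace

lemma eventually_forall_dist_lt {Y X E : Type*} [TopologicalSpace Y] [TopologicalSpace X]
    [CompactSpace X] [PseudoMetricSpace E] {f : Y → X → E} (hf : Continuous ↿f) (y₀ : Y)
    {ε : ℝ} (hε : 0 < ε) : ∀ᶠ y in 𝓝 y₀, ∀ x, dist (f y x) (f y₀ x) < ε := by
  have hdist : Continuous fun p : Y × X => dist (f p.1 p.2) (f y₀ p.2) :=
    hf.dist (hf.comp (continuous_const.prodMk continuous_snd))
  have hlocal (x : X) : ∀ᶠ p : Y × X in 𝓝 (y₀, x), dist (f p.1 p.2) (f y₀ p.2) < ε :=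
    hdist.continuousAt.eventually_lt_const (by simpa using hε)
  simpa using isCompact_univ.eventually_forall_of_forall_eventually fun x _ => hlocal x

lemma exists_forall_mul_norm_le_norm_apply {𝕜 E Y : Type*} [NontriviallyNormedField 𝕜]
    [NormedAddCommGroup E] [NormedSpace 𝕜 E] [CompleteSpace E] [TopologicalSpace Y]
    [CompactSpace Y] {A : Y → E →L[𝕜] E} (hA : Continuous A) (hunit : ∀ y, IsUnit (A y)) :
    ∃ c > 0, ∀ y u, c * ‖u‖ ≤ ‖A y u‖ := by
  have hinv : Continuous fun y => Ring.inverse (A y) := continuous_iff_continuousAt.2 fun y => by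
    obtain ⟨x, hx⟩ := hunit y
    exact ContinuousAt.comp (hx ▸ NormedRing.inverse_continuousAt x) hA.continuousAt
  obtain ⟨M, hM⟩ := isCompact_univ.exists_bound_of_continuousOn hinv.continuousOn
  have hpos : 0 < max M 1 := lt_max_of_lt_right one_pos
  refine ⟨(max M 1)⁻¹, inv_pos.2 hpos, fun y u => (inv_mul_le_iff₀ hpos).2 ?_⟩
  calc ‖u‖ = ‖Ring.inverse (A y) (A y u)‖ := by
        rw [← mul_apply_eq_comp, Ring.inverse_mul_cancel _ (hunit y), one_apply_eq_self]
    _ ≤ max M 1 * ‖A y u‖ := le_of_opNorm_le _ ((hM y trivial).trans (le_max_left _ _)) _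

lemma isUnit_of_forall_mul_norm_le_norm_apply {𝕜 E : Type*} [RCLike 𝕜] [NormedAddCommGroup E]
    [InnerProductSpace 𝕜 E] [CompleteSpace E] {A : E →L[𝕜] E} {c c' : ℝ} (hc : 0 < c)
    (hc' : 0 < c') (hA : ∀ u, c * ‖u‖ ≤ ‖A u‖) (hA' : ∀ u, c' * ‖u‖ ≤ ‖adjoint A u‖) :
    IsUnit A := by
  have hker : (adjoint A).ker = ⊥ := (LinearMap.ker_eq_bot').2 fun u hu => by
    have h := hA' u
    rw [show adjoint A u = 0 from hu, norm_zero] at h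
    exact norm_le_zero_iff.1 (nonpos_of_mul_nonpos_right h hc')
  rw [isUnit_iff_bijective, bijective_iff_dense_range_and_antilipschitz]
  exact ⟨Submodule.topologicalClosure_eq_top_iff.2 (orthogonal_range A ▸ hker),
    antilipschitzWith_iff_exists_mul_le_norm.2 ⟨c, hc, hA⟩⟩

end NormedSpace

section SequenceSpace

variable {ι : Type*}

lemma hasSum_norm_sq (u : ℓ2 ι) : HasSum (fun i => ‖u i‖ ^ 2) (‖u‖ ^ 2) := by
  simpa using lp.hasSum_norm (p := 2) (by norm_num) u

lemma norm_le_mul_norm_of_forall {u v : ℓ2 ι} {C : ℝ} (hC : 0 ≤ C)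
    (h : ∀ i, ‖v i‖ ≤ C * ‖u i‖) : ‖v‖ ≤ C * ‖u‖ := by
  have hCu : ‖v‖ ≤ ‖C • u‖ :=
    lp.norm_mono two_ne_zero fun i => by simpa [norm_smul, abs_of_nonneg hC] using h i
  simpa [norm_smul, abs_of_nonneg hC] using hCu

lemma inner_single_one_left [DecidableEq ι] (i : ι) (u : ℓ2 ι) :
    inner ℂ (lp.single 2 i (1 : ℂ) : ℓ2 ι) u = u i := by
  simp [lp.inner_single_left]

lemma adjoint_apply_of_forall_apply_eq_mul {D : ℓ2 ι →L[ℂ] ℓ2 ι} {g : ι → ℂ}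
    (hD : ∀ u i, D u i = g i * u i) (u : ℓ2 ι) (i : ι) : adjoint D u i = star (g i) * u i := by
  classical
  have hsingle : D (lp.single 2 i (1 : ℂ)) = g i • (lp.single 2 i (1 : ℂ) : ℓ2 ι) := by
    ext j
    obtain rfl | hji := eq_or_ne j i
    · simp [hD]
    · simp [hD, hji]
  rw [← inner_single_one_left, adjoint_inner_right, hsingle, inner_smul_left,
    inner_single_one_left]
  rfl

variable [DecidableEq ι]

/-- The orthogonal projection of `ℓ²(ι)` onto the sequences supported in the finite set `S`. -/
def truncation (S : Finset ι) : ℓ2 ι →L[ℂ] ℓ2 ι :=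
  ∑ i ∈ S, lp.singleContinuousLinearMap ℂ (fun _ => ℂ) 2 i ∘L lp.evalCLM ℂ (fun _ => ℂ) 2 i

lemma truncation_eq_sum_single (S : Finset ι) (u : ℓ2 ι) :
    truncation S u = ∑ i ∈ S, lp.single 2 i (u i) := by
  simp only [truncation, sum_apply]
  rfl

lemma truncation_apply (S : Finset ι) (u : ℓ2 ι) (i : ι) :
    truncation S u i = if i ∈ S then u i else 0 := by
  rw [truncation_eq_sum_single, lp.coeFn_sum, Finset.sum_apply]
  exact Finset.sum_pi_single i u S

lemma norm_truncation_sq (S : Finset ι) (u : ℓ2 ι) :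
    ‖truncation S u‖ ^ 2 = ∑ i ∈ S, ‖u i‖ ^ 2 := by
  rw [truncation_eq_sum_single]
  simpa using lp.norm_sum_single (p := 2) (by norm_num) u S

lemma norm_truncation_le (S : Finset ι) (u : ℓ2 ι) : ‖truncation S u‖ ≤ ‖u‖ := by
  refine lp.norm_mono two_ne_zero fun i => ?_
  rw [truncation_apply]
  split_ifs <;> simp

end SequenceSpace

section Propagation

variable {G : Type*} [AddGroup G]

/-- `A` has propagation in `K` if `(A u) j` only depends on the coordinates `u (j + k)`, `k ∈ K`.
For `G = ℤ` and `K = [-m, m]` the matrix of `A` is a band matrix. -/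
def HasPropagation (K : Set G) (A : ℓ2 G →L[ℂ] ℓ2 G) : Prop :=
  ∀ (u : ℓ2 G) (j : G), (∀ k ∈ K, u (j + k) = 0) → A u j = 0

/-- `B` contains the `K`-boundary of `F`, i.e. the endpoint of every step `j ↦ j + k`, `k ∈ K`,
that enters or leaves `F`. -/
def CoversBoundary (K : Set G) (F B : Finset G) : Prop :=
  ∀ j, ∀ k ∈ K, ¬(j ∈ F ↔ j + k ∈ F) → j + k ∈ B

variable {K : Set G} {A : ℓ2 G →L[ℂ] ℓ2 G} {F B : Finset G}

lemma HasPropagation.sub_algebraMap (hA : HasPropagation K A) (hK : 0 ∈ K) (z : ℂ) :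
    HasPropagation K (A - algebraMap ℂ _ z) := fun u j hu => by
  have hj : u j = 0 := by simpa using hu 0 hK
  rw [sub_apply, lp.coeFn_sub, Pi.sub_apply, hA u j hu, Algebra.algebraMap_eq_smul_one, smul_apply,
    one_apply_eq_self, lp.coeFn_smul, Pi.smul_apply, hj, smul_zero, sub_zero]

lemma HasPropagation.adjoint (hA : HasPropagation K A) :
    HasPropagation (-K) (ContinuousLinearMap.adjoint A) := fun u j hu => by
  classical
  rw [← inner_single_one_left, adjoint_inner_right, lp.inner_eq_tsum]
  refine (tsum_congr fun i => ?_).trans tsum_zero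
  by_cases hi : ∃ k ∈ K, i + k = j
  · obtain ⟨k, hk, rfl⟩ := hi
    have hui : u i = 0 := by simpa using hu (-k) (Set.neg_mem_neg.2 hk)
    rw [hui, inner_zero_right]
  · rw [hA _ i fun k hk => lp.single_apply_ne _ _ _ fun h => hi ⟨k, hk, h⟩, inner_zero_left]

variable [DecidableEq G]

lemma CoversBoundary.vadd (hFB : CoversBoundary K F B) (s : G) :
    CoversBoundary K (s +ᵥ F) (s +ᵥ B) := fun j k hk h => by
  simp only [← Finset.neg_vadd_mem_iff, vadd_eq_add, ← add_assoc] at h ⊢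
  exact hFB _ k hk h

lemma coversBoundary_Ico (m N : ℕ) :
    CoversBoundary (Set.Icc (-m : ℤ) m) (Finset.Ico 0 (N : ℤ))
      (Finset.Ico (-m : ℤ) m ∪ Finset.Ico (N - m : ℤ) (N + m)) := fun j k hk h => by
  simp only [Set.mem_Icc, Finset.mem_union, Finset.mem_Ico] at *
  omega

lemma HasPropagation.comm_truncation (hA : HasPropagation K A) (hFB : CoversBoundary K F B)
    {u : ℓ2 G} (hu : ∀ i ∈ B, u i = 0) : A (truncation F u) = truncation F (A u) := by
  ext j
  rw [truncation_apply]
  split_ifs with hj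
  · rw [← sub_eq_zero, ← Pi.sub_apply, ← lp.coeFn_sub, ← map_sub]
    refine hA _ j fun k hk => ?_
    rw [lp.coeFn_sub, Pi.sub_apply, truncation_apply, sub_eq_zero]
    split_ifs with hjk
    · rfl
    · exact (hu _ (hFB j k hk fun h => hjk (h.1 hj))).symm
  · refine hA _ j fun k hk => ?_
    rw [truncation_apply]
    split_ifs with hjk
    · exact hu _ (hFB j k hk fun h => hj (h.2 hjk))
    · rfl

lemma HasPropagation.norm_commutator_truncation_le (hA : HasPropagation K A)
    (hFB : CoversBoundary K F B) (u : ℓ2 G) :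
    ‖A (truncation F u) - truncation F (A u)‖ ≤ 2 * ‖A‖ * ‖truncation B u‖ := by
  set v := truncation B u
  have hcomm : A (truncation F (u - v)) = truncation F (A (u - v)) :=
    hA.comm_truncation hFB fun i hi => by
      rw [lp.coeFn_sub, Pi.sub_apply, truncation_apply, if_pos hi, sub_self]
  have hv : A (truncation F u) - truncation F (A u) = A (truncation F v) - truncation F (A v) := by
    simp only [map_sub] at hcomm
    exact sub_eq_sub_iff_sub_eq_sub.2 hcomm
  calc ‖A (truncation F u) - truncation F (A u)‖
      ≤ ‖A (truncation F v)‖ + ‖truncation F (A v)‖ := hv ▸ norm_sub_le _ _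
    _ ≤ ‖A‖ * ‖v‖ + ‖A‖ * ‖v‖ := add_le_add
        ((A.le_opNorm _).trans (mul_le_mul_of_nonneg_left (norm_truncation_le F v) (norm_nonneg A)))
        ((norm_truncation_le F _).trans (A.le_opNorm v))
    _ = 2 * ‖A‖ * ‖v‖ := by ring

lemma hasSum_norm_truncation_vadd_sq (F : Finset G) (u : ℓ2 G) :
    HasSum (fun s : G => ‖truncation (s +ᵥ F) u‖ ^ 2) (F.card * ‖u‖ ^ 2) := by
  have htranslate (s : G) : ‖truncation (s +ᵥ F) u‖ ^ 2 = ∑ i ∈ F, ‖u (s + i)‖ ^ 2 := by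
    rw [norm_truncation_sq]
    exact Finset.sum_image (add_right_injective s).injOn
  have hpoint (i : G) : HasSum (fun s => ‖u (s + i)‖ ^ 2) (‖u‖ ^ 2) := by
    simpa only [Function.comp_def, Equiv.coe_addRight] using
      (Equiv.addRight i).hasSum_iff.2 (hasSum_norm_sq u)
  rw [funext htranslate, ← nsmul_eq_mul, ← Finset.sum_const]
  exact hasSum_sum fun i _ => hpoint i

-- Sum, over all translates of `F`, the local lower bound for the truncation of `u`.
lemma HasPropagation.card_mul_norm_sq_le (hA : HasPropagation K A) (hFB : CoversBoundary K F B)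
    {c : ℝ} (hc : 0 ≤ c)
    (hloc : ∀ (s : G) (v : ℓ2 G), (∀ j ∉ s +ᵥ F, v j = 0) → c * ‖v‖ ≤ ‖A v‖) (u : ℓ2 G) :
    c ^ 2 * (F.card * ‖u‖ ^ 2) ≤
      2 * (F.card * ‖A u‖ ^ 2) + 8 * ‖A‖ ^ 2 * (B.card * ‖u‖ ^ 2) := by
  refine hasSum_le (fun s => ?_) ((hasSum_norm_truncation_vadd_sq F u).mul_left (c ^ 2))
    (((hasSum_norm_truncation_vadd_sq F (A u)).mul_left 2).add
      ((hasSum_norm_truncation_vadd_sq B u).mul_left (8 * ‖A‖ ^ 2)))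
  set P := truncation (s +ᵥ F)
  set Q := truncation (s +ᵥ B)
  have hPu : c * ‖P u‖ ≤ ‖P (A u)‖ + 2 * ‖A‖ * ‖Q u‖ := calc
    c * ‖P u‖ ≤ ‖A (P u)‖ := hloc s _ fun j hj => by simp [P, truncation_apply, hj]
    _ ≤ ‖P (A u)‖ + ‖A (P u) - P (A u)‖ := norm_le_norm_add_norm_sub' _ _
    _ ≤ ‖P (A u)‖ + 2 * ‖A‖ * ‖Q u‖ := by
      gcongr; exact hA.norm_commutator_truncation_le (hFB.vadd s) u
  calc c ^ 2 * ‖P u‖ ^ 2 = (c * ‖P u‖) ^ 2 := (mul_pow ..).symm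
    _ ≤ (‖P (A u)‖ + 2 * ‖A‖ * ‖Q u‖) ^ 2 := by gcongr
    _ ≤ 2 * (‖P (A u)‖ ^ 2 + (2 * ‖A‖ * ‖Q u‖) ^ 2) := add_sq_le
    _ = 2 * ‖P (A u)‖ ^ 2 + 8 * ‖A‖ ^ 2 * ‖Q u‖ ^ 2 := by ring

lemma exists_window_forall_mul_norm_le_norm_apply (m : ℕ) (C : ℝ) {c : ℝ} (hc : 0 < c) :
    ∃ N : ℕ, ∀ A : ℓ2 ℤ →L[ℂ] ℓ2 ℤ, HasPropagation (Set.Icc (-m : ℤ) m) A → ‖A‖ ≤ C →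
      (∀ (s : ℤ) (v : ℓ2 ℤ), (∀ j ∉ s +ᵥ Finset.Ico (0 : ℤ) N, v j = 0) → c * ‖v‖ ≤ ‖A v‖) →
      ∀ u, c / 2 * ‖u‖ ≤ ‖A u‖ := by
  obtain ⟨N, hN⟩ := exists_nat_gt (64 * C ^ 2 * m / c ^ 2)
  have hNpos : (0 : ℝ) < N := hN.trans_le' (by positivity)
  rw [div_lt_iff₀ (by positivity)] at hN
  refine ⟨N, fun A hA hAC hloc u => ?_⟩
  set B := Finset.Ico (-m : ℤ) m ∪ Finset.Ico (N - m : ℤ) (N + m)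
  have hB : (B.card : ℝ) ≤ 4 * m := by
    have := Finset.card_union_le (Finset.Ico (-m : ℤ) m) (Finset.Ico (N - m : ℤ) (N + m))
    change B.card ≤ _ at this
    simp only [Int.card_Ico] at this
    exact_mod_cast (show B.card ≤ 4 * m by omega)
  have hsum := hA.card_mul_norm_sq_le (coversBoundary_Ico m N) hc.le hloc u
  rw [Int.card_Ico, sub_zero, Int.toNat_natCast] at hsum
  have hboundary : 8 * ‖A‖ ^ 2 * (B.card * ‖u‖ ^ 2) ≤ N * (c ^ 2 / 2 * ‖u‖ ^ 2) := calc
    8 * ‖A‖ ^ 2 * (B.card * ‖u‖ ^ 2) ≤ 8 * C ^ 2 * (4 * m * ‖u‖ ^ 2) := by gcongr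
    _ = 64 * C ^ 2 * m * (‖u‖ ^ 2 / 2) := by ring
    _ ≤ N * c ^ 2 * (‖u‖ ^ 2 / 2) := by gcongr
    _ = N * (c ^ 2 / 2 * ‖u‖ ^ 2) := by ring
  have hsq : c ^ 2 / 4 * ‖u‖ ^ 2 ≤ ‖A u‖ ^ 2 :=
    le_of_mul_le_mul_left (by linarith) hNpos
  refine le_of_sq_le_sq ?_ (norm_nonneg _)
  linarith [mul_pow (c / 2) ‖u‖ 2]

end Propagation

section Quasiperiodic

variable {X : Type*} [AddGroup X]

/-- The operators `T α θ` on `ℓ²(ℤ)` have diagonal `j ↦ V (θ + j • α)`, up to a constant, and a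
band off-diagonal part of width `m` common to all `α`, `θ`. Comparing two members of the family
instead of naming the off-diagonal part makes the notion stable under subtracting a scalar. -/
structure IsBandedQuasiperiodic (m : ℕ) (V : X → ℂ) (T : X → X → ℓ2 ℤ →L[ℂ] ℓ2 ℤ) : Prop where
  hasPropagation : ∀ α θ, HasPropagation (Set.Icc (-m : ℤ) m) (T α θ)
  sub_apply_eq : ∀ α θ α' θ' u j,
    (T α θ - T α' θ') u j = (V (θ + j • α) - V (θ' + j • α')) * u j

lemma isBandedQuasiperiodic_of_forall_apply_eq {m : ℕ} {V : X → ℂ} {a : ℤ → ℂ}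
    {T : X → X → ℓ2 ℤ →L[ℂ] ℓ2 ℤ}
    (hT : ∀ α θ u j, T α θ u j = V (θ + j • α) * u j
      + ∑ k ∈ Finset.Icc (1 : ℤ) (m : ℤ), (a k * u (j + k) + a (-k) * u (j - k))) :
    IsBandedQuasiperiodic m V T where
  hasPropagation α θ u j hu := by
    have hband (k : ℤ) (hk : k ∈ Finset.Icc (1 : ℤ) m) : u (j + k) = 0 ∧ u (j - k) = 0 := by
      rw [Finset.mem_Icc] at hk
      exact ⟨hu k ⟨by omega, by omega⟩, hu (-k) ⟨by omega, by omega⟩⟩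
    have hdiag : u j = 0 := by simpa using hu 0 (by simp)
    rw [hT, hdiag, mul_zero, zero_add]
    exact Finset.sum_eq_zero fun k hk => by simp [hband k hk]
  sub_apply_eq α θ α' θ' u j := by
    rw [sub_apply, lp.coeFn_sub, Pi.sub_apply, hT, hT, add_sub_add_right_eq_sub, sub_mul]

namespace IsBandedQuasiperiodic

variable {m : ℕ} {V : X → ℂ} {T : X → X → ℓ2 ℤ →L[ℂ] ℓ2 ℤ}

lemma sub_algebraMap (hT : IsBandedQuasiperiodic m V T) (z : ℂ) :
    IsBandedQuasiperiodic m V fun α θ => T α θ - algebraMap ℂ _ z where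
  hasPropagation α θ := (hT.hasPropagation α θ).sub_algebraMap (by simp) z
  sub_apply_eq α θ α' θ' := by simpa only [sub_sub_sub_cancel_right] using hT.sub_apply_eq α θ α' θ'

lemma adjoint (hT : IsBandedQuasiperiodic m V T) :
    IsBandedQuasiperiodic m (star V) fun α θ => ContinuousLinearMap.adjoint (T α θ) where
  hasPropagation α θ := by simpa using (hT.hasPropagation α θ).adjoint
  sub_apply_eq α θ α' θ' u j := by
    rw [← map_sub, adjoint_apply_of_forall_apply_eq_mul (hT.sub_apply_eq α θ α' θ'), star_sub]
    rfl

lemma norm_sub_apply_le (hT : IsBandedQuasiperiodic m V T) {α θ α' θ' : X} {u : ℓ2 ℤ} {η : ℝ}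
    (hη : 0 ≤ η) (h : ∀ j, u j ≠ 0 → ‖V (θ + j • α) - V (θ' + j • α')‖ ≤ η) :
    ‖(T α θ - T α' θ') u‖ ≤ η * ‖u‖ := by
  refine norm_le_mul_norm_of_forall hη fun j => ?_
  rw [hT.sub_apply_eq, norm_mul]
  obtain hj | hj := eq_or_ne (u j) 0
  · simp [hj]
  · exact mul_le_mul_of_nonneg_right (h j hj) (norm_nonneg _)

variable [TopologicalSpace X] [CompactSpace X]

lemma exists_norm_le (hT : IsBandedQuasiperiodic m V T) (hV : Continuous V) :
    ∃ C, ∀ α θ, ‖T α θ‖ ≤ C := by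
  obtain ⟨M, hM⟩ := isCompact_univ.exists_bound_of_continuousOn hV.continuousOn
  have hM0 : 0 ≤ M := (norm_nonneg _).trans (hM 0 trivial)
  have hsub (α θ : X) : ‖T α θ - T 0 0‖ ≤ M + M :=
    opNorm_le_bound _ (by positivity) fun u => hT.norm_sub_apply_le (by positivity) fun j _ =>
      norm_sub_le_of_le (hM _ trivial) (hM _ trivial)
  exact ⟨‖T 0 0‖ + (M + M), fun α θ =>
    (norm_le_norm_add_norm_sub' _ (T 0 0)).trans (add_le_add_right (hsub α θ) _)⟩

variable [IsTopologicalAddGroup X]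

lemma continuous_apply (hT : IsBandedQuasiperiodic m V T) (hV : Continuous V) (α : X) :
    Continuous (T α) := by
  refine Metric.continuous_iff'.2 fun θ₀ ε hε => ?_
  filter_upwards [eventually_forall_dist_lt (f := fun θ x => V (θ + x)) (hV.comp continuous_add) θ₀
    (half_pos hε)] with θ hθ
  rw [dist_eq_norm]
  refine (opNorm_le_bound _ (half_pos hε).le fun u => ?_).trans_lt (half_lt_self hε)
  exact hT.norm_sub_apply_le (half_pos hε).le fun j _ => (dist_eq_norm _ _).symm.trans_le (hθ _).le

lemma eventually_forall_window_mul_norm_le (hT : IsBandedQuasiperiodic m V T) (hV : Continuous V)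
    {α : X} {c : ℝ} (hc : 0 < c) (hα : ∀ θ u, c * ‖u‖ ≤ ‖T α θ u‖) (N : ℕ) :
    ∀ᶠ β in 𝓝 α, ∀ θ (s : ℤ) (v : ℓ2 ℤ), (∀ j ∉ s +ᵥ Finset.Ico (0 : ℤ) N, v j = 0) →
      c / 2 * ‖v‖ ≤ ‖T β θ v‖ := by
  have hclose : ∀ᶠ β in 𝓝 α, ∀ r ∈ Finset.Ico (0 : ℤ) N, ∀ θ,
      dist (V (θ + r • β)) (V (θ + r • α)) < c / 2 :=
    (Filter.eventually_all_finset _).2 fun r _ =>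
      eventually_forall_dist_lt (f := fun β θ => V (θ + r • β))
        (hV.comp (continuous_snd.add (continuous_fst.zsmul r))) α (half_pos hc)
  filter_upwards [hclose] with β hβ θ s v hv
  -- The orbit of `θ'` under `α` meets the orbit of `θ` under `β` at time `s`.
  set θ' := θ + s • β + (-s) • α
  have hdiff : ‖(T β θ - T α θ') v‖ ≤ c / 2 * ‖v‖ := by
    refine hT.norm_sub_apply_le (half_pos hc).le fun j hj => ?_
    have hwindow : -s + j ∈ Finset.Ico (0 : ℤ) N :=
      Finset.neg_vadd_mem_iff.2 (not_imp_comm.1 (hv j) hj)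
    have horbit := (hβ _ hwindow (θ + s • β)).le
    rwa [dist_eq_norm, add_assoc θ, ← add_zsmul, add_neg_cancel_left, add_zsmul,
      ← add_assoc] at horbit
  have hlow := hα θ' v
  have htri := norm_le_norm_add_norm_sub (T β θ v) (T α θ' v)
  rw [sub_apply] at hdiff
  linarith

lemma eventually_forall_mul_norm_le (hT : IsBandedQuasiperiodic m V T) (hV : Continuous V)
    {α : X} {c : ℝ} (hc : 0 < c) (hα : ∀ θ u, c * ‖u‖ ≤ ‖T α θ u‖) :
    ∀ᶠ β in 𝓝 α, ∀ θ u, c / 2 / 2 * ‖u‖ ≤ ‖T β θ u‖ := by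
  obtain ⟨C, hC⟩ := hT.exists_norm_le hV
  obtain ⟨N, hN⟩ := exists_window_forall_mul_norm_le_norm_apply m C (half_pos hc)
  filter_upwards [hT.eventually_forall_window_mul_norm_le hV hc hα N] with β hβ θ
  exact hN _ (hT.hasPropagation β θ) (hC β θ) (hβ θ)

lemma isOpen_setOf_forall_isUnit (hT : IsBandedQuasiperiodic m V T) (hV : Continuous V) :
    IsOpen {α | ∀ θ, IsUnit (T α θ)} := by
  refine isOpen_iff_mem_nhds.2 fun α hα => ?_
  obtain ⟨c, hc, hlow⟩ := exists_forall_mul_norm_le_norm_apply (hT.continuous_apply hV α) hα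
  obtain ⟨c', hc', hlow'⟩ := exists_forall_mul_norm_le_norm_apply
    (hT.adjoint.continuous_apply hV.star α) fun θ => (hα θ).star
  filter_upwards [hT.eventually_forall_mul_norm_le hV hc hlow,
    hT.adjoint.eventually_forall_mul_norm_le hV.star hc' hlow'] with β hβ hβ' θ
  exact isUnit_of_forall_mul_norm_le_norm_apply (by positivity) (by positivity) (hβ θ) (hβ' θ)

end IsBandedQuasiperiodic

theorem weak_continuity_of_spectrum_general {X : Type*} [AddGroup X] [TopologicalSpace X]
    [IsTopologicalAddGroup X] [CompactSpace X] {m : ℕ} {V : X → ℂ} (hV : Continuous V)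
    {T : X → X → ℓ2 ℤ →L[ℂ] ℓ2 ℤ} (hT : IsBandedQuasiperiodic m V T) (z : ℂ) :
    IsClosed {α | z ∈ ⋃ θ, spectrum ℂ (T α θ)} := by
  have hresolvent : {α | z ∈ ⋃ θ, spectrum ℂ (T α θ)}ᶜ =
      {α | ∀ θ, IsUnit (T α θ - algebraMap ℂ _ z)} := by
    ext α
    simp only [Set.mem_compl_iff, Set.mem_ofPred_eq, Set.mem_iUnion, not_exists,
      spectrum.notMem_iff, IsUnit.sub_iff]
  rw [← isOpen_compl_iff, hresolvent]
  exact (hT.sub_algebraMap z).isOpen_setOf_forall_isUnit hV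

end Quasiperiodic

/-- weak continuity of the spectrum: for the banded quasi-periodic
operators `T(α,θ)` with diagonal `V(θ + jα)` and constant off-diagonals `a_{±k}`
(`1 ≤ k ≤ m`), if `α⁽ⁿ⁾ → α` and `z ∈ 𝒮(T(α⁽ⁿ⁾)) = ⋃_θ σ(T(α⁽ⁿ⁾,θ))` for all `n`,
then `z ∈ 𝒮(T(α))`. -/
theorem weak_continuity_of_spectrum {d : ℕ}
    (V : (Fin d → AddCircle (1 : ℝ)) → ℂ) (hVcont : Continuous V)
    (hVholder : ∃ C t : NNReal, 0 < t ∧ HolderWith C t V)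
    (m : ℕ) (a : ℤ → ℂ)
    (T : (Fin d → AddCircle (1 : ℝ)) → (Fin d → AddCircle (1 : ℝ)) → (ℓ2 ℤ →L[ℂ] ℓ2 ℤ))
    (hT : ∀ (α θ : Fin d → AddCircle (1 : ℝ)) (u : ℓ2 ℤ) (j : ℤ),
      T α θ u j = V (θ + j • α) * u j
        + ∑ k ∈ Finset.Icc (1 : ℤ) (m : ℤ), (a k * u (j + k) + a (-k) * u (j - k)))
    (α : Fin d → AddCircle (1 : ℝ)) (αs : ℕ → (Fin d → AddCircle (1 : ℝ)))
    (hconv : Tendsto αs atTop (nhds α)) (z : ℂ)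
    (hz : ∀ n : ℕ, z ∈ ⋃ θ, spectrum ℂ (T (αs n) θ)) :
    z ∈ ⋃ θ, spectrum ℂ (T α θ) := by
  have hclosed := weak_continuity_of_spectrum_general hVcont
    (isBandedQuasiperiodic_of_forall_apply_eq hT) z
  exact hclosed.mem_of_tendsto hconv (Eventually.of_forall hz)
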